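/- Let p be a positive integer and let R be an associative unital ℚ-algebra containing elements b, b†, M satisfying M·b† − b†·M = b†, M·b − b·M = −b, b†·b = M·((p+1) − M), b·b† = (M+1)·(p − M), b^{p+1} = (b†)^{p+1} = 0, and M·(M−1)⋯(M−p) = 0. Set [k] := k(p+1−k), [k]! := ∏_{ℓ=1}^{k}[ℓ], let d_0 = 1, d_n = −∑_{k=0}^{n−1} d_k/[n−k]! for 1 ≤ n ≤ p, and let P_0 := ∑_{k=0}^{p} d_k (b†)^k b^k. Then M = ∑_{m=1}^{p} (m/[m]!) · (b†)^m · P_0 · b^m. -/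

import Mathlib

/-!
Every word `(b†)^n b^n` is a polynomial in `M`: moving `M` through powers of `b` gives
`(b†)^n b^n = F_n(M)` with `F_n(X) = ∏_{i<n} (X - i)(p + 1 - X + i)` (`pow_mul_pow_eq_aeval`).
Hence both sides of the decomposition are polynomials in `M` over `ℚ`, and by the Cayley identity it
suffices to compare them at the points `j = 0, …, p` (`aeval_eq_zero_of_eval`).

There `F_n(j) = [j]!/[j-n]!` for `n ≤ j` and `F_n(j) = 0` for `n > j`. The recursion for `d` says
exactly that `∑_{k ≤ n} d_k/[n-k]! = δ_{n,0}`, so the polynomial of `(b†)^m P_0 b^m`, namely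
`∑_k d_k F_{m+k}`, takes the value `[m]! δ_{j,m}` at `j` (`eval_projector`). Summing against
`m/[m]!` gives `j`.
-/

open Polynomial

/-- The deformed factorial `[m]! = ∏_{ℓ=1}^m ℓ (p + 1 - ℓ)`. -/
def paraFact (p m : ℕ) : ℚ := ∏ ℓ ∈ Finset.Icc 1 m, ((ℓ : ℚ) * ((p : ℚ) + 1 - (ℓ : ℚ)))

/-- The polynomial `F_n = ∏_{i<n} (X - i)(p + 1 - X + i)` with `(b†)^n b^n = F_n(M)`. -/
noncomputable def paraPoly (p n : ℕ) : ℚ[X] :=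
  ∏ i ∈ Finset.range n, ((X - (i : ℚ[X])) * ((p : ℚ[X]) + 1 - (X - (i : ℚ[X]))))

theorem paraFact_succ (p m : ℕ) :
    paraFact p (m + 1) = paraFact p m * (((m : ℚ) + 1) * ((p : ℚ) - m)) := by
  unfold paraFact
  rw [Finset.prod_Icc_succ_top (by omega)]
  push_cast
  ring

theorem paraFact_ne_zero {p m : ℕ} (h : m ≤ p) : paraFact p m ≠ 0 := by
  unfold paraFact
  refine Finset.prod_ne_zero_iff.mpr fun l hl => ?_
  rw [Finset.mem_Icc] at hl
  have h1 : (1 : ℚ) ≤ l := by exact_mod_cast hl.1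
  have h2 : (l : ℚ) ≤ p := by exact_mod_cast hl.2.trans h
  have : (0 : ℚ) < l * ((p : ℚ) + 1 - l) := mul_pos (by linarith) (by linarith)
  exact this.ne'

theorem mul_pow_lower {R : Type*} [Ring R] {b M : R} (hMb : M * b - b * M = -b) (n : ℕ) :
    M * b ^ n = b ^ n * (M - (n : R)) := by
  have h : M * b = b * (M - 1) := by
    rw [mul_sub, mul_one, ← sub_eq_zero, ← sub_eq_zero.mpr hMb]; abel
  induction n with
  | zero => simp
  | succ n ih =>
    rw [pow_succ, ← mul_assoc, ih, mul_assoc, sub_mul, h, Nat.cast_comm, ← mul_sub, ← mul_assoc]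
    push_cast
    congr 1
    abel

theorem pow_mul_pow_eq_aeval {p : ℕ} {R : Type*} [Ring R] [Algebra ℚ R] {b bdag M : R}
    (hMb : M * b - b * M = -b) (hbdb : bdag * b = M * (((p : R) + 1) - M)) (n : ℕ) :
    bdag ^ n * b ^ n = aeval M (paraPoly p n) := by
  induction n with
  | zero => simp [paraPoly]
  | succ n ih =>
    have h1 : (((p : R) + 1) - M) * b ^ n = b ^ n * (((p : R) + 1) - (M - (n : R))) := by
      rw [sub_mul, mul_pow_lower hMb, add_mul, Nat.cast_comm, one_mul]
      simp only [mul_sub, mul_add, mul_one]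
    have h2 : bdag ^ (n + 1) * b ^ (n + 1)
        = bdag ^ n * b ^ n * ((M - (n : R)) * (((p : R) + 1) - (M - (n : R)))) := by
      rw [pow_succ bdag, pow_succ' b]
      calc bdag ^ n * bdag * (b * b ^ n) = bdag ^ n * ((bdag * b) * b ^ n) := by noncomm_ring
        _ = bdag ^ n * (M * ((((p : R) + 1) - M) * b ^ n)) := by rw [hbdb, mul_assoc M]
        _ = bdag ^ n * ((M * b ^ n) * (((p : R) + 1) - (M - (n : R)))) := by
          rw [h1, ← mul_assoc M]
        _ = _ := by rw [mul_pow_lower hMb]; simp only [mul_assoc]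
    rw [h2, ih, paraPoly, paraPoly, Finset.prod_range_succ, map_mul]
    simp

/-- By the Cayley identity, a polynomial vanishing at `0, …, p` annihilates `M`. -/
theorem aeval_eq_zero_of_eval {p : ℕ} {R : Type*} [Ring R] [Algebra ℚ R] {M : R}
    (hCayley : ((List.range (p + 1)).map (fun k : ℕ => M - (k : R))).prod = 0)
    (Q : ℚ[X]) (hQ : ∀ j ≤ p, Q.eval (j : ℚ) = 0) : aeval M Q = 0 := by
  have hdvd : (∏ i ∈ Finset.range (p + 1), (X - C (i : ℚ))) ∣ Q := by
    refine Finset.prod_dvd_of_coprime (fun i _ j _ hij => ?_) fun i hi => ?_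
    · exact pairwise_coprime_X_sub_C (K := ℚ) (s := fun i : ℕ => (i : ℚ)) Nat.cast_injective hij
    · exact dvd_iff_isRoot.mpr (hQ i (by simpa [Nat.lt_succ_iff] using hi))
  have hlist : ∀ n : ℕ, aeval M (∏ i ∈ Finset.range n, (X - C (i : ℚ)))
      = ((List.range n).map (fun k : ℕ => M - (k : R))).prod := by
    intro n
    induction n with
    | zero => simp
    | succ n ih => simp [Finset.prod_range_succ, List.range_succ, ← ih]
  obtain ⟨S, rfl⟩ := hdvd
  rw [map_mul, hlist, hCayley, zero_mul]

theorem eval_paraPoly_of_lt (p : ℕ) {n j : ℕ} (h : j < n) :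
    (paraPoly p n).eval (j : ℚ) = 0 := by
  rw [paraPoly, eval_prod]
  exact Finset.prod_eq_zero (Finset.mem_range.mpr h) (by simp)

theorem eval_paraPoly_mul (p n i : ℕ) :
    (paraPoly p n).eval ((n + i : ℕ) : ℚ) * paraFact p i = paraFact p (n + i) := by
  induction n generalizing i with
  | zero => simp [paraPoly]
  | succ n ih =>
    have := ih (i + 1)
    rw [paraFact_succ] at this
    rw [show n + 1 + i = n + (i + 1) by ring, ← this, paraPoly, paraPoly, Finset.prod_range_succ,
      eval_mul]
    simp
    ring

/-- The polynomial of `(b†)^m P_0 b^m` takes the value `[m]! δ_{j,m}` at each `j ≤ p`. -/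
theorem eval_projector {p : ℕ} {d : ℕ → ℚ} (hd0 : d 0 = 1)
    (hdn : ∀ n : ℕ, 1 ≤ n → n ≤ p →
      d n = -∑ k ∈ Finset.range n, d k / paraFact p (n - k))
    (m j : ℕ) (hj : j ≤ p) :
    ∑ k ∈ Finset.range (p + 1), d k * (paraPoly p (m + k)).eval (j : ℚ)
      = if j = m then paraFact p m else 0 := by
  rcases lt_or_ge j m with hjm | hjm
  · rw [if_neg (by omega)]
    exact Finset.sum_eq_zero fun k _ => by rw [eval_paraPoly_of_lt p (by omega), mul_zero]
  obtain ⟨n, rfl⟩ := Nat.exists_eq_add_of_le hjm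
  have hsub : ∑ k ∈ Finset.range (n + 1), d k * (paraPoly p (m + k)).eval ((m + n : ℕ) : ℚ)
      = ∑ k ∈ Finset.range (p + 1), d k * (paraPoly p (m + k)).eval ((m + n : ℕ) : ℚ) := by
    refine Finset.sum_subset (Finset.range_mono (by omega)) fun k _ hk => ?_
    rw [Finset.mem_range] at hk
    rw [eval_paraPoly_of_lt p (by omega), mul_zero]
  have hval : ∀ k ∈ Finset.range (n + 1), d k * (paraPoly p (m + k)).eval ((m + n : ℕ) : ℚ)
      = paraFact p (m + n) * (d k / paraFact p (n - k)) := by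
    intro k hk
    rw [Finset.mem_range] at hk
    have h := eval_paraPoly_mul p (m + k) (n - k)
    rw [show m + k + (n - k) = m + n by omega] at h
    have hne : paraFact p (n - k) ≠ 0 := paraFact_ne_zero (by omega)
    rw [← h]
    field_simp
  rw [← hsub, Finset.sum_congr rfl hval, ← Finset.mul_sum, Finset.sum_range_succ]
  have hf0 : paraFact p 0 = 1 := by simp [paraFact]
  rcases Nat.eq_zero_or_pos n with rfl | hn
  · simp [hd0, hf0]
  · rw [if_neg (by omega), hdn n hn (by omega), Nat.sub_self, hf0]
    ring


/-- In the order-`p` parafermionic algebra over `ℚ`, with projection coefficients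
`d_0 = 1`, `d_n = -∑_{k=0}^{n-1} d_k/[n-k]!` ([k] = k(p+1-k)) and lowest-weight
projector `P_0 = ∑_{k=0}^{p} d_k (b†)^k b^k`, the number operator decomposes as
`M = ∑_{m=1}^{p} (m/[m]!)·(b†)^m·P_0·b^m`. -/
theorem stmt_16 (p : ℕ) (hp : 0 < p)
    (R : Type*) [Ring R] [Algebra ℚ R] (b bdag M : R)
    (hMbd : M * bdag - bdag * M = bdag)
    (hMb : M * b - b * M = -b)
    (hbdb : bdag * b = M * (((p : R) + 1) - M))
    (hbbd : b * bdag = (M + 1) * ((p : R) - M))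
    (hbnil : b ^ (p + 1) = 0) (hbdnil : bdag ^ (p + 1) = 0)
    (hCayley : ((List.range (p + 1)).map (fun k : ℕ => M - (k : R))).prod = 0)
    (d : ℕ → ℚ)
    (hd0 : d 0 = 1)
    (hdn : ∀ n : ℕ, 1 ≤ n → n ≤ p →
      d n = -∑ k ∈ Finset.range n,
        d k / ∏ ℓ ∈ Finset.Icc 1 (n - k), ((ℓ : ℚ) * ((p : ℚ) + 1 - (ℓ : ℚ))))
    (P0 : R)
    (hP0 : P0 = ∑ k ∈ Finset.range (p + 1), d k • (bdag ^ k * b ^ k)) :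
    M = ∑ m ∈ Finset.Icc 1 p,
      ((m : ℚ) / ∏ ℓ ∈ Finset.Icc 1 m, ((ℓ : ℚ) * ((p : ℚ) + 1 - (ℓ : ℚ)))) •
        (bdag ^ m * P0 * b ^ m) := by
  have hword := pow_mul_pow_eq_aeval (p := p) hMb hbdb
  let Q : ℚ[X] := X - ∑ m ∈ Finset.Icc 1 p, C ((m : ℚ) / paraFact p m) *
    ∑ k ∈ Finset.range (p + 1), C (d k) * paraPoly p (m + k)
  have hQ : aeval M Q = 0 := by
    refine aeval_eq_zero_of_eval hCayley Q fun j hj => ?_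
    simp only [Q, eval_sub, eval_X, eval_finsetSum, eval_mul, eval_C]
    simp only [eval_projector hd0 hdn _ j hj, mul_ite, mul_zero, Finset.sum_ite_eq,
      Finset.mem_Icc]
    split_ifs with h
    · rw [div_mul_cancel₀ _ (paraFact_ne_zero hj), sub_self]
    · have : j = 0 := by omega
      simp [this]
  have hP : ∀ m, bdag ^ m * P0 * b ^ m
      = ∑ k ∈ Finset.range (p + 1), d k • aeval M (paraPoly p (m + k)) := by
    intro m
    rw [hP0, Finset.mul_sum, Finset.sum_mul]
    refine Finset.sum_congr rfl fun k _ => ?_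
    rw [mul_smul_comm, smul_mul_assoc, ← hword, pow_add bdag, add_comm m k, pow_add b]
    simp only [mul_assoc]
  simp only [Q, map_sub, map_sum, map_mul, aeval_X, aeval_C, ← Algebra.smul_def] at hQ
  simp only [hP]
  exact sub_eq_zero.mp hQ
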